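/- Let 𝒲 be the van der Waerden ideal, consisting of all sets A ⊆ ℕ for which there is k ∈ ℕ such that A contains no arithmetic progression of length k. There exists a lower semicontinuous submeasure φ on ℕ with Fin(φ) = 𝒲 and P_Fin(φ) ≤ 2; consequently there exists a nonpathological lower semicontinuous submeasure ψ with Fin(ψ) = 𝒲, i.e., 𝒲 is a nonpathological F_σ ideal. -/

import Mathlib

open Filter
open scoped ENNReal

/-- A submeasure on a set (type) `X`. -/
def IsSubmeasure {X : Type*} (φ : Set X → ℝ≥0∞) : Prop :=
  φ ∅ = 0 ∧ (∀ A B : Set X, A ⊆ B → φ A ≤ φ B) ∧ ∀ A B : Set X, φ (A ∪ B) ≤ φ A + φ B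

/-- A (finitely additive) measure on `X`. -/
def IsFAMeasure {X : Type*} (μ : Set X → ℝ≥0∞) : Prop :=
  μ ∅ = 0 ∧ ∀ A B : Set X, Disjoint A B → μ (A ∪ B) = μ A + μ B

/-- A σ-measure on `X`: a measure that is countably additive on pairwise disjoint sequences. -/
def IsSigmaMeasure {X : Type*} (μ : Set X → ℝ≥0∞) : Prop :=
  IsFAMeasure μ ∧ ∀ A : ℕ → Set X, (Pairwise fun m n => Disjoint (A m) (A n)) →
    μ (⋃ n, A n) = ∑' n, μ (A n)

/-- `hat φ A = sup { μ A : μ a measure with μ ≤ φ pointwise }`. -/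
noncomputable def hat {X : Type*} (φ : Set X → ℝ≥0∞) (A : Set X) : ℝ≥0∞ :=
  ⨆ (μ : Set X → ℝ≥0∞) (_ : IsFAMeasure μ ∧ ∀ B, μ B ≤ φ B), μ A

/-- `hatSigma φ A = sup { μ A : μ a σ-measure with μ ≤ φ pointwise }`. -/
noncomputable def hatSigma {X : Type*} (φ : Set X → ℝ≥0∞) (A : Set X) : ℝ≥0∞ :=
  ⨆ (μ : Set X → ℝ≥0∞) (_ : IsSigmaMeasure μ ∧ ∀ B, μ B ≤ φ B), μ A

/-- Lower semicontinuity of a submeasure. -/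
def IsLSC {X : Type*} (φ : Set X → ℝ≥0∞) : Prop :=
  ∀ A : Set X, φ A = ⨆ (F : Set X) (_ : F ⊆ A ∧ F.Finite), φ F

/-- The ratio used in the degree of pathology, with the conventions
`∞/∞ = 0/0 = 1`, `a/0 = ∞` and `∞/a = ∞` for positive real `a`. -/
noncomputable def pratio (a b : ℝ≥0∞) : ℝ≥0∞ :=
  if (a = 0 ∧ b = 0) ∨ (a = ⊤ ∧ b = ⊤) then 1 else a / b

/-- The degree of pathology. -/
noncomputable def degP {X : Type*} (φ : Set X → ℝ≥0∞) : ℝ≥0∞ :=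
  ⨆ A : Set X, pratio (φ A) (hat φ A)

/-- The σ-degree of pathology. -/
noncomputable def degPSigma {X : Type*} (φ : Set X → ℝ≥0∞) : ℝ≥0∞ :=
  ⨆ A : Set X, pratio (φ A) (hatSigma φ A)

/-- The Fin-degree of pathology. -/
noncomputable def degPFin {X : Type*} (φ : Set X → ℝ≥0∞) : ℝ≥0∞ :=
  ⨆ (A : Set X) (_ : A.Finite), pratio (φ A) (hat φ A)

/-- `A` contains an arithmetic progression of length `k`. -/
def ContainsAP (A : Set ℕ) (k : ℕ) : Prop :=
  ∃ a d : ℕ, 0 < d ∧ ∀ i < k, a + i * d ∈ A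

/-- The van der Waerden ideal: sets not containing arbitrarily long arithmetic progressions. -/
def vdW : Set (Set ℕ) :=
  {A | ∃ k, ¬ ContainsAP A k}

set_option linter.unusedSectionVars false
set_option linter.style.haveILetI false
set_option linter.unusedVariables false
namespace DHJ
open Classical in
/-- indicator -/
noncomputable def ind {X : Type} (A : Set X) (x : X) : ℝ := if x ∈ A then 1 else 0

/-- average over a finite type -/
noncomputable def av {X : Type} [Finite X] (f : X → ℝ) : ℝ :=
  letI := Fintype.ofFinite X
  (∑ x, f x) / (Nat.card X : ℝ)

/-- density -/
noncomputable def dn {X : Type} [Finite X] (A : Set X) : ℝ := av (ind A)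

section av
variable {X Y T : Type} [Finite X] [Finite Y] [Finite T]

lemma av_eq [Fintype X] (f : X → ℝ) : av f = (∑ x, f x) / (Nat.card X : ℝ) := by
  unfold av
  congr 1
  convert rfl

lemma ind_nonneg (A : Set X) (x) : 0 ≤ ind A x := by unfold ind; split_ifs <;> norm_num
lemma ind_le_one (A : Set X) (x) : ind A x ≤ 1 := by unfold ind; split_ifs <;> norm_num
lemma ind_of_mem {A : Set X} {x} (h : x ∈ A) : ind A x = 1 := by simp [ind, h]
lemma ind_of_notMem {A : Set X} {x} (h : x ∉ A) : ind A x = 0 := by simp [ind, h]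

lemma av_const [Nonempty X] (c : ℝ) : av (fun _ : X => c) = c := by
  letI := Fintype.ofFinite X
  rw [av_eq]
  have : (Nat.card X : ℝ) ≠ 0 := by simp
  simp [Nat.card_eq_fintype_card]

lemma av_mono {f g : X → ℝ} (h : ∀ x, f x ≤ g x) : av f ≤ av g := by
  letI := Fintype.ofFinite X
  rw [av_eq, av_eq]
  gcongr
  exact h _

lemma av_add (f g : X → ℝ) : av (fun x => f x + g x) = av f + av g := by
  letI := Fintype.ofFinite X
  simp only [av_eq, Finset.sum_add_distrib, add_div]

lemma av_sub (f g : X → ℝ) : av (fun x => f x - g x) = av f - av g := by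
  letI := Fintype.ofFinite X
  simp only [av_eq, Finset.sum_sub_distrib, sub_div]

lemma av_mul (c : ℝ) (f : X → ℝ) : av (fun x => c * f x) = c * av f := by
  letI := Fintype.ofFinite X
  simp only [av_eq, ← Finset.mul_sum, mul_div_assoc]

lemma av_sum {T : Type} (s : Finset T) (f : T → X → ℝ) :
    av (fun x => ∑ t ∈ s, f t x) = ∑ t ∈ s, av (f t) := by
  letI := Fintype.ofFinite X
  simp only [av_eq]
  rw [Finset.sum_comm, Finset.sum_div]

lemma av_equiv (e : X ≃ Y) (f : Y → ℝ) : av (fun x => f (e x)) = av f := by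
  letI := Fintype.ofFinite X
  letI := Fintype.ofFinite Y
  rw [av_eq, av_eq, Nat.card_congr e, Equiv.sum_comp]

lemma av_prod (f : X × Y → ℝ) : av f = av (fun x => av fun y => f (x, y)) := by
  letI := Fintype.ofFinite X
  letI := Fintype.ofFinite Y
  simp only [av_eq, Fintype.sum_prod_type, Nat.card_prod]
  rw [← Finset.sum_div, div_div]
  push_cast
  rw [mul_comm (Nat.card Y : ℝ)]

lemma av_comm (f : X → Y → ℝ) : av (fun x => av fun y => f x y) = av (fun y => av fun x => f x y) := by
  rw [← av_prod (fun p : X × Y => f p.1 p.2), ← av_prod (fun p : Y × X => f p.2 p.1)]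
  exact (av_equiv (Equiv.prodComm X Y) (fun p : Y × X => f p.2 p.1))

lemma exists_ge_av [Nonempty X] (f : X → ℝ) : ∃ x, av f ≤ f x := by
  by_contra! h
  letI := Fintype.ofFinite X
  have h1 : (0:ℝ) < Nat.card X := by exact_mod_cast Nat.card_pos
  have : ∑ x, f x < ∑ _x : X, av f :=
    Finset.sum_lt_sum_of_nonempty Finset.univ_nonempty (fun x _ => h x)
  rw [Finset.sum_const, Finset.card_univ, ← Nat.card_eq_fintype_card, nsmul_eq_mul,
    av_eq f, mul_div_cancel₀ _ h1.ne'] at this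
  exact lt_irrefl _ this

lemma av_le_of_le [Nonempty X] {f : X → ℝ} {c : ℝ} (h : ∀ x, f x ≤ c) : av f ≤ c :=
  (av_mono h).trans (av_const c).le

lemma le_av_of_le [Nonempty X] {f : X → ℝ} {c : ℝ} (h : ∀ x, c ≤ f x) : c ≤ av f :=
  (av_const c).symm.le.trans (av_mono h)

lemma av_nonneg {f : X → ℝ} (h : ∀ x, 0 ≤ f x) : 0 ≤ av f := by
  letI := Fintype.ofFinite X
  rw [av_eq]
  exact div_nonneg (Finset.sum_nonneg fun x _ => h x) (by positivity)

lemma dn_nonneg (A : Set X) : 0 ≤ dn A := av_nonneg (ind_nonneg A)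
lemma dn_le_one [Nonempty X] (A : Set X) : dn A ≤ 1 := av_le_of_le (ind_le_one A)

lemma ind_mono {A B : Set X} (h : A ⊆ B) (x) : ind A x ≤ ind B x := by
  by_cases hx : x ∈ A
  · rw [ind_of_mem hx, ind_of_mem (h hx)]
  · rw [ind_of_notMem hx]; exact ind_nonneg _ _

lemma dn_mono {A B : Set X} (h : A ⊆ B) : dn A ≤ dn B := av_mono (ind_mono h)

lemma dn_equiv (e : X ≃ Y) (A : Set Y) : dn (e ⁻¹' A) = dn A := av_equiv e (ind A)

lemma nonempty_of_dn_pos {A : Set X} (h : 0 < dn A) : A.Nonempty := by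
  by_contra hA
  rw [Set.not_nonempty_iff_eq_empty] at hA
  subst hA
  have : dn (∅ : Set X) ≤ 0 := by
    letI := Fintype.ofFinite X
    simp [dn, av_eq, ind]
  linarith

lemma dn_eq_card (A : Set X) : dn A = (Nat.card A : ℝ) / Nat.card X := by
  classical
  letI := Fintype.ofFinite X
  unfold dn
  rw [av_eq]
  congr 1
  simp only [ind]
  rw [Finset.sum_boole, Nat.card_eq_fintype_card, Fintype.card_subtype]

lemma av_range {V : Y → X} [Nonempty Y] (hV : Function.Injective V) (h : X → ℝ) :
    av (fun x => ind (Set.range V) x * h x) = (Nat.card Y / Nat.card X : ℝ) * av (fun y => h (V y)) := by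
  classical
  letI := Fintype.ofFinite X
  letI := Fintype.ofFinite Y
  have h1 : (Nat.card Y : ℝ) ≠ 0 := by simp
  rw [av_eq, av_eq]
  have : ∑ x, ind (Set.range V) x * h x = ∑ y, h (V y) := by
    simp only [ind, ite_mul, one_mul, zero_mul]
    rw [← Finset.sum_filter]
    have : (Finset.univ.filter fun x => x ∈ Set.range V) = Finset.univ.image V := by
      ext; simp
    rw [this, Finset.sum_image (fun a _ b _ h => hV h)]
  rw [this]
  field_simp

/-- the pigeonhole principle used throughout -/
lemma pigeon [Nonempty X] (R : T → X → Prop) (g : X → ℝ) (c : ℝ) (hc : 0 < c) (hg1 : ∀ x, g x ≤ 1)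
    (hav : 2 * c ≤ av g) (hR : ∀ x, c ≤ g x → ∃ t, R t x) :
    ∃ t, c / (Nat.card T + 1) ≤ dn {x | R t x} := by
  by_contra! hcon
  letI := Fintype.ofFinite T
  have h1 : av g ≤ c + ∑ t, dn {x | R t x} := by
    have : ∀ x, g x ≤ c + ∑ t, ind {x | R t x} x := by
      intro x
      by_cases hx : c ≤ g x
      · obtain ⟨t, ht⟩ := hR x hx
        have : ind {x | R t x} x ≤ ∑ t, ind {x | R t x} x :=
          Finset.single_le_sum (f := fun t => ind {x | R t x} x)
            (fun t _ => ind_nonneg _ _) (Finset.mem_univ t)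
        rw [ind_of_mem (show x ∈ {x | R t x} from ht)] at this
        linarith [hg1 x]
      · have : 0 ≤ ∑ t, ind {x | R t x} x := Finset.sum_nonneg (fun t _ => ind_nonneg _ _)
        linarith
    refine (av_mono this).trans ?_
    rw [av_add, av_const, av_sum]
    rfl
  have h2 : ∑ t, dn {x | R t x} ≤ ∑ _t : T, c / (Nat.card T + 1) :=
    Finset.sum_le_sum (fun t _ => (hcon t).le)
  rw [Finset.sum_const, Finset.card_univ, ← Nat.card_eq_fintype_card, nsmul_eq_mul] at h2
  have h3 : (Nat.card T : ℝ) * (c / (Nat.card T + 1)) < c := by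
    have : (0:ℝ) < Nat.card T + 1 := by positivity
    rw [mul_div_assoc', div_lt_iff₀ this]
    nlinarith
  linarith

lemma av_sumArrow {ι κ α : Type} [Finite ι] [Finite κ] [Finite α] (f : (ι ⊕ κ → α) → ℝ) :
    av f = av (fun x : ι → α => av (fun z : κ → α => f (Sum.elim x z))) := by
  rw [← av_equiv (Equiv.sumArrowEquivProdArrow ι κ α).symm f, av_prod]
  rfl

lemma dn_pi {ι α : Type} [Fintype ι] [Finite α] [Nonempty α] (S : ι → Set α) :
    dn {x : ι → α | ∀ i, x i ∈ S i} = ∏ i, dn (S i) := by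
  simp only [dn_eq_card]
  rw [Finset.prod_div_distrib]
  congr 1
  · rw [← Nat.cast_prod, ← Nat.card_pi]
    congr 1
    refine Nat.card_congr ⟨fun x i => ⟨x.1 i, x.2 i⟩, fun y => ⟨fun i => (y i).1, fun i => (y i).2⟩,
      fun _ => rfl, fun _ => rfl⟩
  · rw [← Nat.cast_prod, ← Nat.card_pi]
end av

/-- combinatorial subspaces -/
@[ext] structure Sub (η α ι : Type) where
  idx : ι → α ⊕ η
  proper : ∀ e, ∃ i, idx i = Sum.inr e

namespace Sub
variable {η θ α ι κ : Type}

/-- evaluation -/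
def ev (V : Sub η α ι) (x : η → α) : ι → α := fun i => Sum.elim id x (V.idx i)

lemma ev_inj (V : Sub η α ι) : Function.Injective V.ev := by
  intro x y h
  ext e
  obtain ⟨i, hi⟩ := V.proper e
  have := congrFun h i
  simpa [ev, hi] using this

instance [Finite η] [Finite α] [Finite ι] : Finite (Sub η α ι) :=
  Finite.of_injective (fun V => V.idx) (fun _ _ h => Sub.ext h)

/-- composition -/
def comp (V : Sub η α ι) (W : Sub θ α η) : Sub θ α ι where
  idx i := Sum.elim Sum.inl W.idx (V.idx i)
  proper e := by
    obtain ⟨j, hj⟩ := W.proper e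
    obtain ⟨i, hi⟩ := V.proper j
    exact ⟨i, by simp [hi, hj]⟩

@[simp] lemma ev_comp (V : Sub η α ι) (W : Sub θ α η) (x) : (V.comp W).ev x = V.ev (W.ev x) := by
  ext i
  simp only [ev, comp]
  rcases V.idx i with a | a <;> simp [ev]

/-- reindexing -/
def ofEquiv (e : ι ≃ κ) : Sub κ α ι where
  idx i := Sum.inr (e i)
  proper j := ⟨e.symm j, by simp⟩

@[simp] lemma ev_ofEquiv (e : ι ≃ κ) (x : κ → α) : (ofEquiv e).ev x = x ∘ e := rfl

/-- a section -/
def fixL (x : ι → α) : Sub κ α (ι ⊕ κ) where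
  idx := Sum.elim (fun i => Sum.inl (x i)) Sum.inr
  proper j := ⟨Sum.inr j, rfl⟩

@[simp] lemma ev_fixL (x : ι → α) (z : κ → α) : (fixL x).ev z = Sum.elim x z := by
  ext i; rcases i with i | i <;> rfl

/-- a section -/
def fixR (z : κ → α) : Sub ι α (ι ⊕ κ) where
  idx := Sum.elim Sum.inr (fun i => Sum.inl (z i))
  proper j := ⟨Sum.inl j, rfl⟩

@[simp] lemma ev_fixR (x : ι → α) (z : κ → α) : (fixR z).ev x = Sum.elim x z := by
  ext i; rcases i with i | i <;> rfl

/-- product -/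
def prod (V : Sub η α ι) (W : Sub θ α κ) : Sub (η ⊕ θ) α (ι ⊕ κ) where
  idx := Sum.elim (fun i => (V.idx i).map id Sum.inl) (fun i => (W.idx i).map id Sum.inr)
  proper e := by
    rcases e with e | e
    · obtain ⟨i, hi⟩ := V.proper e
      exact ⟨Sum.inl i, by simp [hi]⟩
    · obtain ⟨i, hi⟩ := W.proper e
      exact ⟨Sum.inr i, by simp [hi]⟩

lemma ev_prod (V : Sub η α ι) (W : Sub θ α κ) (x : η ⊕ θ → α) :
    (V.prod W).ev x = Sum.elim (V.ev (x ∘ Sum.inl)) (W.ev (x ∘ Sum.inr)) := by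
  ext i
  rcases i with i | i
  · simp only [ev, prod, Sum.elim_inl]
    rcases V.idx i with a | a <;> simp
  · simp only [ev, prod, Sum.elim_inr]
    rcases W.idx i with a | a <;> simp

open Classical in
/-- gluing -/
noncomputable def glue (p : ι → Prop) (c : {i // ¬ p i} → α) : Sub {i // p i} α ι where
  idx i := if h : p i then Sum.inr ⟨i, h⟩ else Sum.inl (c ⟨i, h⟩)
  proper e := ⟨e.1, by simp [e.2]⟩

lemma ev_glue_pos (p : ι → Prop) (c : {i // ¬ p i} → α) (w) (i) (h : p i) :
    (glue p c).ev w i = w ⟨i, h⟩ := by simp [ev, glue, h]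

lemma ev_glue_neg (p : ι → Prop) (c : {i // ¬ p i} → α) (w) (i) (h : ¬ p i) :
    (glue p c).ev w i = c ⟨i, h⟩ := by simp [ev, glue, h]
end Sub

/-- glueing preserves averages -/
lemma av_glue {ι α : Type} [Finite ι] [Finite α] (p : ι → Prop) (f : (ι → α) → ℝ) :
    av f = av (fun c : {i // ¬ p i} → α => av (fun w => f ((Sub.glue p c).ev w))) := by
  classical
  rw [← av_equiv (Equiv.piEquivPiSubtypeProd p (fun _ => α)).symm f, av_prod, av_comm]
  congr! 5
  ext i
  by_cases h : p i
  · rw [Sub.ev_glue_pos _ _ _ _ h]; simp [Equiv.piEquivPiSubtypeProd, h]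
  · rw [Sub.ev_glue_neg _ _ _ _ h]; simp [Equiv.piEquivPiSubtypeProd, h]

/-- contains a line -/
def HasLine {α ι : Type} (A : Set (ι → α)) : Prop := ∃ V : Sub Unit α ι, ∀ y, V.ev y ∈ A

lemma HasLine.of_preimage {α ι η : Type} {A : Set (ι → α)} (V : Sub η α ι)
    (h : HasLine (V.ev ⁻¹' A)) : HasLine A := by
  obtain ⟨W, hW⟩ := h
  exact ⟨V.comp W, fun y => by simpa using hW y⟩

/-- density Hales-Jewett for the alphabet `α` -/
def Dense (α : Type) [Finite α] : Prop :=
  ∀ ε : ℝ, 0 < ε → ∃ n : ℕ, ∀ A : Set (Fin n → α), ε ≤ dn A → HasLine A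

lemma exists_split {ι : Type} [Finite ι] {n N : ℕ} (h : n + N ≤ Nat.card ι) :
    ∃ m, N ≤ m ∧ Nonempty (ι ≃ Fin n ⊕ Fin m) := by
  refine ⟨Nat.card ι - n, by omega, ⟨(Finite.equivFin ι).trans ?_⟩⟩
  exact (finCongr (by omega)).trans finSumFinEquiv.symm

lemma dn_comp_equiv {ι κ α : Type} [Finite ι] [Finite κ] [Finite α] (e : ι ≃ κ) (A : Set (ι → α)) :
    dn ((Sub.ofEquiv (α := α) e).ev ⁻¹' A) = dn A :=
  dn_equiv (e.symm.arrowCongr (Equiv.refl α)) A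

/-- multidimensional density Hales-Jewett -/
lemma multi {α : Type} [Finite α] [Nonempty α] (H : Dense α) (m : ℕ) : ∀ ε : ℝ, 0 < ε →
    ∃ N : ℕ, ∀ (ι : Type) [Finite ι], N ≤ Nat.card ι → ∀ A : Set (ι → α), ε ≤ dn A →
      ∃ V : Sub (Fin m) α ι, ∀ y, V.ev y ∈ A := by
  induction m with
  | zero =>
    intro ε hε
    refine ⟨0, fun ι _ _ A hA => ?_⟩
    obtain ⟨x, hx⟩ := nonempty_of_dn_pos (hε.trans_le hA)
    exact ⟨⟨fun i => Sum.inl (x i), fun e => e.elim0⟩, fun y => hx⟩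
  | succ m ih =>
    intro ε hε
    obtain ⟨n, hn⟩ := H (ε / 2) (by positivity)
    obtain ⟨N, hN⟩ := ih (ε / 2 / (Nat.card (Sub Unit α (Fin n)) + 1)) (by positivity)
    refine ⟨n + N, fun ι _ hι A hA => ?_⟩
    obtain ⟨q, hq, ⟨e⟩⟩ := exists_split hι
    rw [← dn_comp_equiv e A] at hA
    set A' := (Sub.ofEquiv (α := α) e).ev ⁻¹' A with hA'
    unfold dn at hA
    rw [av_sumArrow, av_comm] at hA
    obtain ⟨L, hL⟩ := pigeon (T := Sub Unit α (Fin n))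
      (fun L (z : Fin q → α) => ∀ y, Sum.elim (L.ev y) z ∈ A')
      (fun z => av fun x => ind A' (Sum.elim x z)) (ε / 2) (by positivity)
      (fun z => av_le_of_le (fun x => ind_le_one _ _)) (by linarith) (fun z hz => by
        obtain ⟨L, hL⟩ := hn {x | Sum.elim x z ∈ A'} hz
        exact ⟨L, hL⟩)
    obtain ⟨V, hV⟩ := hN (Fin q) (by simpa using hq) _ hL
    let e2 : Unit ⊕ Fin m ≃ Fin (m + 1) :=
      ((Equiv.sumComm _ _).trans ((Equiv.sumCongr (Equiv.refl _) finOneEquiv.symm).trans finSumFinEquiv))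
    refine ⟨(Sub.ofEquiv e).comp ((L.prod V).comp (Sub.ofEquiv e2)), fun y => ?_⟩
    rw [Sub.ev_comp, Sub.ev_comp, Sub.ev_prod]
    exact hV _ _
end DHJ

namespace DHJ
section ins
variable {β : Type}

/-- replace the extra letter by `b` -/
def rb (b : β) (o : Option β) : Option β := some (o.getD b)

/-- insensitive sets -/
def Ins {ι : Type} (b : β) (D : Set (ι → Option β)) : Prop :=
  ∀ x, x ∈ D ↔ (fun i => rb b (x i)) ∈ D

lemma Ins.compl {ι : Type} {b : β} {D : Set (ι → Option β)} (h : Ins b D) : Ins b Dᶜ :=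
  fun x => not_congr (h x)

lemma rb_rb (b : β) (o) : rb b (rb b o) = rb b o := by simp [rb]

lemma Ins.ev_iff {ι η : Type} {b : β} {D : Set (ι → Option β)} (h : Ins b D)
    (V : Sub η (Option β) ι) (x) : V.ev x ∈ D ↔ V.ev (fun i => rb b (x i)) ∈ D := by
  rw [h, h (V.ev fun i => rb b (x i))]
  have : (fun i => rb b (V.ev x i)) = (fun i => rb b (V.ev (fun i => rb b (x i)) i)) := by
    ext1 i
    simp only [Sub.ev]
    rcases V.idx i with a | a <;> simp [rb_rb]
  rw [this]

lemma Ins.preimage {ι η : Type} {b : β} {D : Set (ι → Option β)} (h : Ins b D)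
    (V : Sub η (Option β) ι) : Ins b (V.ev ⁻¹' D) := fun x => h.ev_iff V x

/-- resampling of the letters different from `none` -/
def res {ι : Type} (x : ι → Option β) (y : ι → β) : ι → Option β :=
  fun i => (x i).map (fun _ => y i)

lemma av_res {ι : Type} [Finite ι] [Finite β] [AddGroup β] (f : (ι → Option β) → ℝ) :
    av f = av (fun x : ι → Option β => av (fun y : ι → β => f (res x y))) := by
  have h1 : ∀ x : ι → Option β, av (fun y : ι → β => f (res x y)) =
      av (fun y : ι → β => f (fun i => (x i).map (fun c => c + y i))) := by
    intro x
    rw [← av_equiv (Equiv.piCongrRight (fun i => Equiv.addLeft ((x i).getD 0)))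
      (fun y : ι → β => f (res x y))]
    congr! 3 with y
    ext1 i
    simp only [res]
    rcases h : x i with _ | c <;> simp [h]
  simp only [h1]
  rw [av_comm]
  have h2 : ∀ y : ι → β, av (fun x : ι → Option β => f (fun i => (x i).map (fun c => c + y i))) = av f := by
    intro y
    exact av_equiv (Equiv.piCongrRight (fun i => Equiv.optionCongr (Equiv.addRight (y i)))) f
  simp only [h2]
  rw [av_const]

lemma insens_sub [Finite β] [AddGroup β] (H : Dense β) (m : ℕ) (θ : ℝ) (hθ : 0 < θ) :
    ∃ M : ℕ, ∀ (b : β) (D : Set (Fin M → Option β)), Ins b D → θ ≤ dn D →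
      ∃ V : Sub (Fin m) (Option β) (Fin M), ∀ y, V.ev y ∈ D := by
  obtain ⟨N, hN⟩ := multi H m (θ / 2) (by positivity)
  have hlt : dn ({none} : Set (Option β)) < 1 := by
    rw [dn_eq_card, div_lt_one (by exact_mod_cast Nat.card_pos)]
    rw [Finite.card_option]
    have : 0 < Nat.card β := Nat.card_pos
    simp
  obtain ⟨t, ht⟩ := exists_pow_lt_of_lt_one (show 0 < θ / 2 / (N + 1) by positivity) hlt
  let e : Fin (N * t) ≃ Fin N × Fin t := finProdFinEquiv.symm
  refine ⟨N * t, fun b D hD hd => ?_⟩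
  let Bad : Fin N → Set (Fin (N * t) → Option β) := fun i => {x | ∀ s, x (e.symm (i, s)) = none}
  have hBad : ∀ i, dn (Bad i) ≤ θ / 2 / (N + 1) := by
    intro i
    have : Bad i = {x | ∀ j, x j ∈ (if (e j).1 = i then {none} else Set.univ : Set (Option β))} := by
      ext x
      constructor
      · intro h j
        split_ifs with hj
        · have := h (e j).2
          rw [← hj, Prod.mk.eta, Equiv.symm_apply_apply] at this
          exact this
        · trivial
      · intro h s
        have := h (e.symm (i, s))
        simpa using this
    rw [this, dn_pi, ← Equiv.prod_comp e.symm, Fintype.prod_prod_type]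
    refine le_trans ?_ ht.le
    have h1 : dn (Set.univ : Set (Option β)) = 1 := by
      rw [dn_eq_card, Nat.card_univ, div_self]; exact_mod_cast Nat.card_pos.ne'
    have : ∀ i' : Fin N, ∏ s : Fin t, dn (if (e (e.symm (i', s))).1 = i then {none} else Set.univ : Set (Option β))
        = if i' = i then dn ({none} : Set (Option β)) ^ t else 1 := by
      intro i'
      simp only [Equiv.apply_symm_apply]
      split_ifs <;> simp [h1]
    simp only [this]
    simp
  have hex : ∃ x : Fin (N * t) → Option β, (∀ i, x ∉ Bad i) ∧ θ / 2 ≤ av (fun y => ind D (res x y)) := by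
    by_contra! hcon
    have : av (fun x : Fin (N * t) → Option β => av (fun y => ind D (res x y))) ≤
        av (fun x : Fin (N * t) → Option β => ∑ i, ind (Bad i) x + θ / 2) := by
      refine av_mono fun x => ?_
      by_cases hx : ∀ i, x ∉ Bad i
      · have : 0 ≤ ∑ i, ind (Bad i) x := Finset.sum_nonneg fun i _ => ind_nonneg _ _
        linarith [hcon x hx]
      · push Not at hx
        obtain ⟨i, hi⟩ := hx
        have h1 : ind (Bad i) x ≤ ∑ i, ind (Bad i) x :=
          Finset.single_le_sum (f := fun i => ind (Bad i) x) (fun t _ => ind_nonneg _ _) (Finset.mem_univ i)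
        rw [ind_of_mem hi] at h1
        have : av (fun y => ind D (res x y)) ≤ 1 := av_le_of_le fun y => ind_le_one _ _
        linarith
    rw [← av_res, av_add, av_const, av_sum] at this
    have h2 : ∑ i, av (ind (Bad i)) ≤ ∑ _i : Fin N, θ / 2 / (N + 1) := Finset.sum_le_sum fun i _ => hBad i
    rw [Finset.sum_const, Finset.card_univ, nsmul_eq_mul, Fintype.card_fin] at h2
    have h3 : (N : ℝ) * (θ / 2 / (N + 1)) < θ / 2 := by
      rw [mul_div_assoc', div_lt_iff₀ (by positivity)]
      nlinarith
    unfold dn at hd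
    linarith
  obtain ⟨x, hx, hxd⟩ := hex
  rw [av_glue (fun i => x i ≠ none)] at hxd
  obtain ⟨c, hc⟩ := exists_ge_av (fun c : {i // ¬ x i ≠ none} → β =>
    av fun w => ind D (res x ((Sub.glue (fun i => x i ≠ none) c).ev w)))
  replace hc := hxd.trans hc
  have hcard : N ≤ Nat.card {i // x i ≠ none} := by
    simp only [Bad, Set.mem_ofPred_eq, not_forall] at hx
    choose s hs using hx
    refine (Nat.card_fin N).symm.le.trans (Nat.card_le_card_of_injective (fun i : Fin N => (⟨e.symm (i, s i), hs i⟩ : {i // x i ≠ none})) ?_)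
    intro i j hij
    simpa using congrArg (fun z => (e z.1).1) hij
  obtain ⟨V, hV⟩ := hN {i // x i ≠ none} hcard
    {w | res x ((Sub.glue (fun i => x i ≠ none) c).ev w) ∈ D} hc
  classical
  let V' : Sub (Fin m) (Option β) (Fin (N * t)) :=
    { idx := fun i => if h : x i ≠ none then (V.idx ⟨i, h⟩).map some id else Sum.inl none
      proper := by
        intro e
        obtain ⟨i, hi⟩ := V.proper e
        exact ⟨i.1, by rw [dif_pos i.2]; simp [hi]⟩ }
  have hV' : ∀ y, V'.ev (fun i => some (y i)) = res x ((Sub.glue (fun i => x i ≠ none) c).ev (V.ev y)) := by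
    intro y
    ext1 i
    by_cases h : x i ≠ none
    · obtain ⟨a, ha⟩ := Option.ne_none_iff_exists'.1 h
      simp only [res]
      rw [Sub.ev_glue_pos (fun i => x i ≠ none) _ _ i h, ha]
      simp only [Sub.ev, V', dif_pos h]
      rcases V.idx ⟨i, h⟩ with a | a <;> simp
    · simp only [res, Sub.ev, V', dif_neg h]
      push Not at h
      simp [h]
  refine ⟨V', fun y => ?_⟩
  rw [hD.ev_iff]
  have := hV (fun i => (y i).getD b)
  rw [Set.mem_ofPred_eq, ← hV'] at this
  exact this
end ins

/-- tiling property -/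
def Tile {α κ : Type} [Finite α] [Finite κ] (m : ℕ) (θ : ℝ) (D : Set (κ → α)) : Prop :=
  ∀ f : (κ → α) → ℝ, (∀ x, f x ≤ 1) → (∀ V : Sub (Fin m) α κ, av (fun y => f (V.ev y)) ≤ 0) →
    av (fun x => ind D x * f x) ≤ θ

lemma tile_step {β : Type} [Finite β] [AddGroup β] (H : Dense β) (m : ℕ) (θ c : ℝ) (hθ : 0 < θ)
    (hc : 0 ≤ c) :
    ∃ M : ℕ, ∃ r : ℝ, 0 < r ∧ ∀ j : ℕ, ∀ (κ : Type) [Finite κ], j * M ≤ Nat.card κ →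
      ∀ (b : β) (D : Set (κ → Option β)), Ins b D →
      ∀ f : (κ → Option β) → ℝ, (∀ x, f x ≤ 1) →
      (∀ V : Sub (Fin m) (Option β) κ, av (fun y => f (V.ev y)) ≤ 0) →
      av (fun x => ind D x * f x) ≤ max θ (1 - j * (c * r)) + c * dn D := by
  obtain ⟨M, hM⟩ := insens_sub H m (θ / 2) (by positivity)
  set T := Nat.card (Sub (Fin m) (Option β) (Fin M)) with hT
  set K := Nat.card (Fin M → Option β) with hK
  have hKpos : (0:ℝ) < K := by exact_mod_cast Nat.card_pos
  set r : ℝ := 1 / K * (θ / 2 / (T + 1)) with hr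
  refine ⟨M, r, by positivity, fun j => ?_⟩
  have base : ∀ (κ : Type) [Finite κ], ∀ (D : Set (κ → Option β)), 
      ∀ f : (κ → Option β) → ℝ, (∀ x, f x ≤ 1) → av (fun x => ind D x * f x) ≤ dn D := by
    intro κ _ D f hf
    refine av_mono fun x => ?_
    nlinarith [ind_nonneg D x, hf x]
  induction j with
  | zero =>
    intro κ _ _ b D hD f hf _
    have := base κ D f hf
    have h1 := dn_le_one D
    have h2 := dn_nonneg D
    have h3 : (1:ℝ) ≤ max θ (1 - (0:ℕ) * (c * r)) := by simp
    nlinarith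
  | succ j ih =>
    intro κ _ hκ b D hD f hf hV
    by_cases hsmall : dn D < θ
    · have := base κ D f hf
      have h1 : θ ≤ max θ (1 - ((j+1 : ℕ) : ℝ) * (c * r)) := le_max_left _ _
      have h2 := mul_nonneg hc (dn_nonneg D)
      linarith
    push Not at hsmall
    obtain ⟨q, hq, ⟨e⟩⟩ := exists_split (n := M) (N := j * M) (ι := κ) (by linarith [Nat.succ_mul j M])
    -- transfer
    set E := (Sub.ofEquiv (α := Option β) e).ev ⁻¹' D with hE
    have hEins : Ins b E := hD.preimage _
    set g : (Fin M ⊕ Fin q → Option β) → ℝ := fun x => f ((Sub.ofEquiv e).ev x) with hg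
    have hEd : dn E = dn D := dn_comp_equiv e D
    have hEf : av (fun x => ind D x * f x) = av (fun x => ind E x * g x) :=
      (av_equiv (e.symm.arrowCongr (Equiv.refl (Option β))) (fun x => ind D x * f x)).symm
    have hgV : ∀ V : Sub (Fin m) (Option β) (Fin M ⊕ Fin q), av (fun y => g (V.ev y)) ≤ 0 := by
      intro V
      simpa [hg] using hV ((Sub.ofEquiv e).comp V)
    rw [hEf, ← hEd]
    rw [← hEd] at hsmall
    -- pigeonhole
    have hav : θ ≤ av (fun z : Fin q → Option β => av fun x : Fin M → Option β => ind E (Sum.elim x z)) := by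
      rw [← av_comm, ← av_sumArrow]; exact hsmall
    obtain ⟨V, hVZ⟩ := pigeon (T := Sub (Fin m) (Option β) (Fin M))
      (fun V (z : Fin q → Option β) => ∀ y, Sum.elim (V.ev y) z ∈ E)
      (fun z => av fun x => ind E (Sum.elim x z)) (θ / 2) (by positivity)
      (fun z => av_le_of_le (fun x => ind_le_one _ _)) (by linarith) (fun z hz => by
        obtain ⟨V, hV⟩ := hM b {x | Sum.elim x z ∈ E} (by
          have := hEins.preimage (Sub.fixR z)
          simpa [Set.preimage] using this) hz
        exact ⟨V, hV⟩)
    set Z : Set (Fin q → Option β) := {z | ∀ y, Sum.elim (V.ev y) z ∈ E} with hZ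
    have hZins : Ins b Z := by
      intro z
      refine forall_congr' fun y => ?_
      have := hEins.ev_iff (Sub.fixL (V.ev y)) z
      simpa using this
    let Ex : (Fin M → Option β) → Set (Fin q → Option β) := fun x => 
      {z | Sum.elim x z ∈ E ∧ ¬ (x ∈ Set.range V.ev ∧ z ∈ Z)}
    have hExins : ∀ x, Ins b (Ex x) := by
      intro x z
      have h1 := hEins.ev_iff (Sub.fixL x) z
      simp only [Sub.ev_fixL] at h1
      have h2 := hZins z
      simp only [Ex, Set.mem_ofPred_eq, ← h1, ← h2]
    have hsplit : ∀ x z, ind E (Sum.elim x z) = ind (Ex x) z + ind (Set.range V.ev) x * ind Z z := by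
      intro x z
      have hmem : z ∈ Ex x ↔ (Sum.elim x z ∈ E ∧ ¬ (x ∈ Set.range V.ev ∧ z ∈ Z)) := Iff.rfl
      have himp : x ∈ Set.range V.ev → z ∈ Z → Sum.elim x z ∈ E := by
        rintro ⟨y, rfl⟩ hz; exact hz y
      by_cases hz : z ∈ Z <;> by_cases hx : x ∈ Set.range V.ev <;>
        by_cases hE1 : Sum.elim x z ∈ E <;> simp only [ind, hmem, hz, hx, hE1] <;> simp
      exact hE1 (himp hx hz)
    have hdE : dn E = av (fun x => dn (Ex x)) + av (fun x => ind (Set.range V.ev) x * dn Z) := by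
      unfold dn
      rw [av_sumArrow, ← av_add]
      congr 1; ext x
      rw [← av_mul, ← av_add]
      simp only [hsplit]
    have hrange : r ≤ av (fun x => ind (Set.range V.ev) x * dn Z) := by
      rw [av_range V.ev_inj, av_const, hr]
      have h1 : (1:ℝ) ≤ Nat.card (Fin m → Option β) := by
        exact_mod_cast Nat.card_pos
      gcongr
    have hmain : av (fun x => ind E x * g x) ≤
        av (fun x => av (fun z => ind (Ex x) z * g (Sum.elim x z))) := by
      rw [av_sumArrow]
      have : ∀ x : Fin M → Option β, (av fun z : Fin q → Option β => ind E (Sum.elim x z) * g (Sum.elim x z)) =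
          av (fun z => ind (Ex x) z * g (Sum.elim x z)) +
            ind (Set.range V.ev) x * av (fun z => ind Z z * g (Sum.elim x z)) := by
        intro x
        rw [← av_mul, ← av_add]
        congr 1; ext z
        rw [hsplit]; ring
      simp only [this]
      rw [av_add, av_range V.ev_inj, av_comm (fun y z => ind Z z * g (Sum.elim (V.ev y) z))]
      have : av (fun z : Fin q → Option β => av fun y => ind Z z * g (Sum.elim (V.ev y) z)) ≤ 0 := by
        refine av_le_of_le fun z => ?_
        rw [av_mul]
        refine mul_nonpos_of_nonneg_of_nonpos (ind_nonneg _ _) ?_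
        simpa using hgV ((Sub.fixR z).comp V)
      have h2 : (0:ℝ) ≤ Nat.card (Fin m → Option β) / Nat.card (Fin M → Option β) := by positivity
      nlinarith [mul_nonpos_of_nonneg_of_nonpos h2 this]
    have hfib : av (fun x => av (fun z => ind (Ex x) z * g (Sum.elim x z))) ≤
        av (fun x => max θ (1 - j * (c * r)) + c * dn (Ex x)) := by
      refine av_mono fun x => ?_
      refine ih (Fin q) (by simpa using hq) b (Ex x) (hExins x) (fun z => g (Sum.elim x z)) (fun z => hf _) ?_
      intro W
      simpa using hgV ((Sub.fixL x).comp W)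
    rw [av_add, av_const, av_mul] at hfib
    have hfin : max θ (1 - j * (c * r)) - c * r ≤ max θ (1 - ((j+1 : ℕ):ℝ) * (c * r)) := by
      have hcr : 0 ≤ c * r := by positivity
      push_cast
      rcases max_cases θ (1 - j * (c * r)) with h | h
      · rw [h.1]; linarith [le_max_left θ (1 - ((j:ℝ)+1) * (c * r))]
      · rw [h.1]; linarith [le_max_right θ (1 - ((j:ℝ)+1) * (c * r))]
    have : c * av (fun x => dn (Ex x)) ≤ c * dn E - c * r := by
      rw [hdE]; nlinarith
    linarith

lemma tile_one {β : Type} [Finite β] [AddGroup β] (H : Dense β) (m : ℕ) (θ : ℝ) (hθ : 0 < θ) :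
    ∃ N : ℕ, ∀ (κ : Type) [Finite κ], N ≤ Nat.card κ →
      ∀ (b : β) (D : Set (κ → Option β)), Ins b D → Tile m θ D := by
  obtain ⟨M, r, hr, h⟩ := tile_step H m (θ / 2) (θ / 2) (by positivity) (by positivity)
  obtain ⟨j, hj⟩ := exists_nat_gt (1 / (θ / 2 * r))
  rw [div_lt_iff₀ (by positivity)] at hj
  refine ⟨j * M, fun κ _ hκ b D hD f hf hV => ?_⟩
  have h1 := h j κ hκ b D hD f hf hV
  rw [max_eq_left (by linarith)] at h1
  nlinarith [dn_le_one D]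

lemma tile_many {β : Type} [Finite β] [AddGroup β] (H : Dense β) (s : Finset β) :
    ∀ (m : ℕ) (θ : ℝ), 0 < θ →
    ∃ N : ℕ, ∀ (κ : Type) [Finite κ], N ≤ Nat.card κ →
      ∀ (D : β → Set (κ → Option β)), (∀ b, Ins b (D b)) → Tile m θ {x | ∀ b ∈ s, x ∈ D b} := by
  classical
  induction s using Finset.induction_on with
  | empty =>
    intro m θ hθ
    obtain ⟨N, hN⟩ := tile_one H m θ hθ
    refine ⟨N, fun κ _ hκ D hD => ?_⟩
    refine hN κ hκ 0 _ (fun x => by simp)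
  | insert b s hb ih =>
    intro m θ hθ
    obtain ⟨N1, hN1⟩ := ih m (θ / 2) (by positivity)
    obtain ⟨N, hN⟩ := tile_one H N1 (θ / 2) (by positivity)
    refine ⟨N, fun κ _ hκ D hD f hf hV => ?_⟩
    set S : Set (κ → Option β) := {x | ∀ b ∈ s, x ∈ D b} with hS
    have h1 := hN κ hκ b (D b) (hD b) (fun x => ind S x * f x - θ / 2)
      (fun x => by nlinarith [ind_nonneg S x, ind_le_one S x, hf x]) (fun V => by
        rw [av_sub, av_const]
        have := hN1 (Fin N1) (by simp) (fun b => V.ev ⁻¹' (D b)) (fun b => (hD b).preimage V)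
          (fun y => f (V.ev y)) (fun y => hf _) (fun W => by simpa using hV (V.comp W))
        have h2 : ∀ y, ind {x | ∀ b ∈ s, x ∈ V.ev ⁻¹' (D b)} y = ind S (V.ev y) := fun y => rfl
        simp only [h2] at this
        linarith)
    have h3 : av (fun x => ind {x | ∀ b' ∈ insert b s, x ∈ D b'} x * f x) =
        av (fun x => ind (D b) x * (ind S x * f x - θ / 2) + θ / 2 * ind (D b) x) := by
      congr 1; ext x
      by_cases hx : x ∈ D b <;> by_cases hx' : x ∈ S <;>
        simp only [hS, Set.mem_ofPred_eq] at hx' <;> simp [ind, hx, hx', hS]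
    rw [h3, av_add, av_mul]
    have := dn_le_one (D b)
    unfold dn at this
    nlinarith

lemma tile_compl {β : Type} [Finite β] [AddGroup β] (H : Dense β) (s : Finset β) :
    ∀ (m : ℕ) (θ : ℝ), 0 < θ →
    ∃ N : ℕ, ∀ (κ : Type) [Finite κ], N ≤ Nat.card κ →
      ∀ (D : β → Set (κ → Option β)), (∀ b, Ins b (D b)) →
        Tile m (s.card * θ) {x | ∀ b ∈ s, x ∈ D b}ᶜ := by
  classical
  intro m θ hθ
  induction s using Finset.induction_on with
  | empty =>
    refine ⟨0, fun κ _ hκ D hD f hf hV => ?_⟩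
    have : ∀ x, ind ({x | ∀ b ∈ (∅ : Finset β), x ∈ D b}ᶜ) x * f x = 0 := fun x => by simp [ind]
    simp only [this]
    rw [av_const]; simp
  | insert b s hb ih =>
    obtain ⟨N1, hN1⟩ := ih
    obtain ⟨N2, hN2⟩ := tile_many H (insert b s) m θ hθ
    refine ⟨max N1 N2, fun κ _ hκ D hD f hf hV => ?_⟩
    have h1 := hN1 κ ((le_max_left _ _).trans hκ) D hD f hf hV
    have h2 := hN2 κ ((le_max_right _ _).trans hκ) (Function.update D b (D b)ᶜ) (by
      intro b'
      by_cases h : b' = b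
      · subst h; simpa using (hD b').compl
      · simpa [h] using hD b') f hf hV
    have h3 : av (fun x => ind {x | ∀ b' ∈ insert b s, x ∈ D b'}ᶜ x * f x) =
        av (fun x => ind {x | ∀ b' ∈ s, x ∈ D b'}ᶜ x * f x +
          ind {x | ∀ b' ∈ insert b s, x ∈ Function.update D b (D b)ᶜ b'} x * f x) := by
      congr 1; ext x
      have e1 : x ∈ {x | ∀ b' ∈ insert b s, x ∈ Function.update D b (D b)ᶜ b'} ↔
          x ∉ D b ∧ ∀ b' ∈ s, x ∈ D b' := by
        simp only [Set.mem_ofPred_eq, Finset.forall_mem_insert, Function.update_self, Set.mem_compl_iff]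
        refine and_congr_right fun _ => forall₂_congr fun b' hb' => ?_
        rw [Function.update_of_ne (by rintro rfl; exact hb hb')]
      have e2 : x ∈ {x | ∀ b' ∈ insert b s, x ∈ D b'}ᶜ ↔ ¬ (x ∈ D b ∧ ∀ b' ∈ s, x ∈ D b') := by
        simp only [Set.mem_compl_iff, Set.mem_ofPred_eq, Finset.forall_mem_insert]
      have e3 : x ∈ {x | ∀ b' ∈ s, x ∈ D b'}ᶜ ↔ ¬ (∀ b' ∈ s, x ∈ D b') := Iff.rfl
      by_cases hx : x ∈ D b <;> by_cases hx' : (∀ b' ∈ s, x ∈ D b')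
      · rw [ind_of_notMem (fun h => e2.1 h ⟨hx, hx'⟩), ind_of_notMem (fun h => e3.1 h hx'),
          ind_of_notMem (fun h => (e1.1 h).1 hx)]; simp
      · rw [ind_of_mem (e2.2 fun h => hx' h.2), ind_of_mem (e3.2 hx'),
          ind_of_notMem (fun h => (e1.1 h).1 hx)]; simp
      · rw [ind_of_mem (e2.2 fun h => hx h.1), ind_of_notMem (fun h => e3.1 h hx'),
          ind_of_mem (e1.2 ⟨hx, hx'⟩)]; simp
      · rw [ind_of_mem (e2.2 fun h => hx h.1), ind_of_mem (e3.2 hx'),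
          ind_of_notMem (fun h => hx' (e1.1 h).2)]; simp
    rw [h3, av_add, Finset.card_insert_of_notMem hb]
    push_cast
    linarith
end DHJ

set_option linter.style.haveILetI false
namespace DHJ

/-- insert letters in the place of `none`, blockwise -/
def Phi {β : Type} {m0 m : ℕ} (x : Fin m0 × Fin m → Option β) (u : Fin m0 → β) :
    Fin m0 × Fin m → Option β := fun q => some ((x q).getD (u q.1))

lemma dn_noNone {β κ : Type} [Finite β] [Finite κ] :
    dn {w : κ → Option β | ∀ q, w q ≠ none} = (dn ({none}ᶜ : Set (Option β))) ^ (Nat.card κ) := by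
  letI := Fintype.ofFinite κ
  have : {w : κ → Option β | ∀ q, w q ≠ none} = {w | ∀ q, w q ∈ (fun _ => {none}ᶜ : κ → Set (Option β)) q} := by
    ext; simp
  rw [this, dn_pi, Finset.prod_const, Finset.card_univ, Nat.card_eq_fintype_card]

/-- the core counting argument -/
lemma core {β : Type} [Finite β] [AddGroup β] (δ η : ℝ) (hδ : 0 < δ) (hδ1 : δ ≤ 1) 
    (m0 m n1 n0 : ℕ) (hm0 : ∀ A : Set (Fin m0 → β), δ / 3 ≤ dn A → HasLine A)
    (hη : η = δ / 3 / (Nat.card (Sub Unit β (Fin m0)) + 1))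
    (hn1 : ∀ A : Set (Fin n1 → Option β), ¬ HasLine A → dn A ≤ δ + δ * η / 8)
    (htile : ∀ (κ : Type) [Finite κ], m ≤ Nat.card κ →
      ∀ (D : β → Set (κ → Option β)), (∀ b, Ins b (D b)) →
        Tile n1 (δ * η / 8) {x | ∀ b, x ∈ D b}ᶜ)
    (hm : ∀ (κ : Type) [Finite κ], m ≤ Nat.card κ →
      dn {w : κ → Option β | ∀ q, w q ≠ none} ≤ δ * η / 8)
    (A : Set ((Fin m0 × Fin m) ⊕ Fin n0 → Option β)) (hA : ¬ HasLine A)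
    (hfib : ∀ x : Fin m0 × Fin m → Option β, 
      δ - δ * η / 8 ≤ dn {z : Fin n0 → Option β | Sum.elim x z ∈ A}) : False := by
  have hηpos : 0 < η := by rw [hη]; positivity
  have hη1 : η ≤ 1 / 3 := by
    rw [hη]
    refine (div_le_self (by positivity) ?_).trans (by linarith)
    simp
  have hsm : δ * η / 8 ≤ δ / 24 := by nlinarith
  -- find the line
  obtain ⟨L, hL⟩ := pigeon (T := Sub Unit β (Fin m0))
    (X := (Fin m0 × Fin m → Option β) × (Fin n0 → Option β))
    (fun L p => ∀ y, Sum.elim (Phi p.1 (L.ev y)) p.2 ∈ A)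
    (fun p => av fun u => ind A (Sum.elim (Phi p.1 u) p.2)) (δ / 3) (by positivity)
    (fun z => av_le_of_le (fun x => ind_le_one _ _)) (by
      rw [av_prod]
      refine le_av_of_le fun x => ?_
      simp only
      rw [av_comm]
      refine le_av_of_le fun u => ?_
      have := hfib (Phi x u)
      refine le_trans ?_ this
      linarith) (fun p hp => by
      obtain ⟨L, hL⟩ := hm0 {u | Sum.elim (Phi p.1 u) p.2 ∈ A} hp
      exact ⟨L, hL⟩)
  rw [← hη] at hL
  -- fix the inactive coordinates
  let P : Fin m0 × Fin m → Prop := fun q => L.idx q.1 = Sum.inr ()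
  unfold dn at hL
  rw [av_prod, av_glue P] at hL
  obtain ⟨c, hc⟩ := exists_ge_av (fun c : {q // ¬ P q} → Option β =>
    av fun w => av fun z => ind {p : (Fin m0 × Fin m → Option β) × (Fin n0 → Option β) |
      ∀ y, Sum.elim (Phi p.1 (L.ev y)) p.2 ∈ A} ((Sub.glue P c).ev w, z))
  replace hc := hL.trans hc
  rw [av_comm] at hc
  let c' : {q // ¬ P q} → Option β := fun q => some ((c q).getD (L.ev (fun _ => 0) q.1.1))
  let G := Sub.glue P c'
  have hG : ∀ w y, Phi ((Sub.glue P c).ev w) (L.ev y) = G.ev (fun i => rb (y ()) (w i)) := by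
    intro w y
    ext1 q
    by_cases hq : P q
    · simp only [Phi, G]
      rw [Sub.ev_glue_pos _ _ _ _ hq, Sub.ev_glue_pos _ _ _ _ hq]
      have : L.idx q.1 = Sum.inr () := hq
      simp [Sub.ev, this, rb]
    · simp only [Phi, G]
      rw [Sub.ev_glue_neg _ _ _ _ hq, Sub.ev_glue_neg _ _ _ _ hq]
      simp only [c', Sub.ev]
      have hq' : L.idx q.1 ≠ Sum.inr () := hq
      rcases h : L.idx q.1 with a | a
      · simp
      · exact absurd h hq'
  let D : (Fin n0 → Option β) → β → Set ({q // P q} → Option β) := fun z b =>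
    {w | Sum.elim (G.ev (fun i => rb b (w i))) z ∈ A}
  let Az : (Fin n0 → Option β) → Set ({q // P q} → Option β) := fun z =>
    {w | Sum.elim (G.ev w) z ∈ A}
  have hD : ∀ z b, Ins b (D z b) := by
    intro z b x
    simp only [D, Set.mem_ofPred_eq, rb_rb]
  let I : (Fin n0 → Option β) → Set ({q // P q} → Option β) := fun z => {w | ∀ b, w ∈ D z b}
  have hcI : η ≤ av (fun z => dn (I z)) := by
    refine hc.trans (av_mono fun z => av_mono fun w => ?_)
    by_cases hw : w ∈ I z
    · rw [ind_of_mem hw]; exact ind_le_one _ _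
    · rw [ind_of_notMem, ind_of_notMem hw]
      intro h
      apply hw
      intro b
      have := h (fun _ => b)
      simp only at this
      rw [hG] at this
      exact this
  have hAzav : δ - δ * η / 8 ≤ av (fun z => dn (Az z)) := by
    unfold dn
    rw [av_comm]
    refine le_av_of_le fun w => ?_
    exact hfib (G.ev w)
  have hAzline : ∀ z, ¬ HasLine (Az z) := by
    intro z h
    apply hA
    apply HasLine.of_preimage ((Sub.fixR z).comp G)
    simpa [Set.preimage] using h
  have hcard : m ≤ Nat.card {q // P q} := by
    obtain ⟨i, hi⟩ := L.proper ()
    refine (Nat.card_fin m).symm.le.trans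
      (Nat.card_le_card_of_injective (fun t : Fin m => (⟨(i, t), hi⟩ : {q // P q})) ?_)
    intro t t' h
    simpa using h
  have hAI : ∀ z, Az z ∩ I z ⊆ {w | ∀ q, w q ≠ none} := by
    rintro z w ⟨h1, h2⟩ q hq
    apply hAzline z
    refine ⟨⟨fun i => (w i).elim (Sum.inr ()) (fun b => Sum.inl (some b)), fun _ => ⟨q, by simp [hq]⟩⟩, ?_⟩
    intro y
    rcases hy : y () with _ | b
    · convert h1 using 1
      ext1 i
      rcases hi : w i with _ | b <;> simp [Sub.ev, hi, hy]
    · have h3 := h2 b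
      have h4 : (fun i => rb b (w i)) ∈ Az z := h3
      convert h4 using 1
      ext1 i
      rcases hi : w i with _ | b <;> simp [Sub.ev, hi, hy, rb]
  have hz : ∀ z, dn (Az z) - δ * η / 8 - (δ + δ * η / 8) * (1 - dn (I z)) ≤ δ * η / 8 := by
    intro z
    have ht := htile _ hcard (D z) (hD z) (fun w => ind (Az z) w - (δ + δ * η / 8))
      (fun w => by
        have : 0 ≤ δ + δ * η / 8 := by positivity
        linarith [ind_le_one (Az z) w]) (fun V => by
        rw [av_sub, av_const]
        have h1 := hn1 (V.ev ⁻¹' Az z) (fun h => hAzline z (h.of_preimage V))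
        have h2 : av (fun y => ind (Az z) (V.ev y)) = dn (V.ev ⁻¹' Az z) := rfl
        linarith)
    refine le_trans ?_ ht
    have h1 := hm _ hcard
    have h2 : dn (Az z) - dn {w : {q // P q} → Option β | ∀ q, w q ≠ none} - (δ + δ * η / 8) * (1 - dn (I z)) =
      av (fun w => ind (Az z) w - ind {w : {q // P q} → Option β | ∀ q, w q ≠ none} w
        - (δ + δ * η / 8) * (1 - ind (I z) w)) := by
      rw [av_sub, av_sub, av_mul, av_sub, av_const]
      rfl
    refine le_trans (b := dn (Az z) - dn {w : {q // P q} → Option β | ∀ q, w q ≠ none} - (δ + δ * η / 8) * (1 - dn (I z))) (by linarith) ?_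
    rw [h2]
    refine av_mono fun w => ?_
    by_cases hw : w ∈ I z
    · have hw' : w ∉ {x | ∀ b, x ∈ D z b}ᶜ := fun h => h hw
      rw [ind_of_notMem hw', ind_of_mem hw]
      by_cases hw2 : w ∈ Az z
      · rw [ind_of_mem hw2, ind_of_mem (hAI z ⟨hw2, hw⟩)]; linarith
      · rw [ind_of_notMem hw2]
        linarith [ind_nonneg {w : {q // P q} → Option β | ∀ q, w q ≠ none} w]
    · have hw' : w ∈ {x | ∀ b, x ∈ D z b}ᶜ := hw
      rw [ind_of_mem hw', ind_of_notMem hw]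
      linarith [ind_nonneg {w : {q // P q} → Option β | ∀ q, w q ≠ none} w]
  have hfinal := av_le_of_le hz
  rw [av_sub, av_sub, av_const, av_mul, av_sub, av_const] at hfinal
  have hpos : 0 < δ * η := by positivity
  nlinarith [mul_pos hpos hηpos, mul_le_mul_of_nonneg_left hcI (show 0 ≤ δ + δ * η / 8 by positivity)]

lemma dense_option {β : Type} [Finite β] [AddGroup β] (H : Dense β) : Dense (Option β) := by
  letI := Fintype.ofFinite β
  let S : Set ℝ := {c | ∃ n : ℕ, ∀ A : Set (Fin n → Option β), ¬ HasLine A → dn A ≤ c}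
  have h1S : (1:ℝ) ∈ S := ⟨0, fun A _ => dn_le_one A⟩
  have hnoline : ∀ n : ℕ, ¬ HasLine (∅ : Set (Fin n → Option β)) := by
    rintro n ⟨V, hV⟩; exact hV (fun _ => none)
  have hS0 : ∀ c ∈ S, 0 ≤ c := by
    rintro c ⟨n, hn⟩
    exact (dn_nonneg _).trans (hn ∅ (hnoline n))
  have hbdd : BddBelow S := ⟨0, hS0⟩
  set δ := sInf S with hδdef
  have hlt : ∀ c, δ < c → c ∈ S := by
    intro c hc
    obtain ⟨c', ⟨n, hn⟩, hc'⟩ := exists_lt_of_csInf_lt ⟨1, h1S⟩ hc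
    exact ⟨n, fun A hA => (hn A hA).trans hc'.le⟩
  rcases le_or_gt δ 0 with hδ | hδ
  · intro ε hε
    obtain ⟨n, hn⟩ := hlt (ε / 2) (by linarith)
    refine ⟨n, fun A hA => ?_⟩
    by_contra hcon
    linarith [hn A hcon]
  exfalso
  have hδ1 : δ ≤ 1 := csInf_le hbdd h1S
  obtain ⟨m0, hm0⟩ := H (δ / 3) (by positivity)
  obtain ⟨η, hη⟩ : ∃ η, η = δ / 3 / (Nat.card (Sub Unit β (Fin m0)) + 1) := ⟨_, rfl⟩
  have hηpos : 0 < η := by rw [hη]; positivity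
  have hpos : 0 < δ * η / 8 := by positivity
  obtain ⟨n1, hn1⟩ := hlt (δ + δ * η / 8) (by linarith)
  have hkpos : (0:ℝ) < (Finset.univ : Finset β).card := by
    exact_mod_cast Finset.card_pos.2 ⟨0, Finset.mem_univ _⟩
  obtain ⟨N, hN⟩ := tile_compl H Finset.univ n1 (δ * η / 8 / (Finset.univ : Finset β).card) (by positivity)
  have hq : dn ({none}ᶜ : Set (Option β)) < 1 := by
    have h1 : dn ({none}ᶜ : Set (Option β)) + dn ({none} : Set (Option β)) = 1 := by
      unfold dn
      rw [← av_add, ← av_const (X := Option β) 1]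
      congr 1; ext x
      by_cases hx : x = none <;> simp [ind, hx]
    have h2 : 0 < dn ({none} : Set (Option β)) := by
      rw [dn_eq_card]
      have : (0:ℝ) < Nat.card (Option β) := by exact_mod_cast Nat.card_pos
      simpa using this
    linarith
  obtain ⟨t, ht⟩ := exists_pow_lt_of_lt_one hpos hq
  set m := max N t with hmdef
  obtain ⟨K, hK⟩ : ∃ K : ℝ, K = (Nat.card (Fin m0 × Fin m → Option β) : ℝ) := ⟨_, rfl⟩
  have hKpos : 0 < K := by
    rw [hK]; exact_mod_cast Nat.card_pos
  obtain ⟨ε, hε⟩ : ∃ ε, ε = δ * η / 8 / (2 * K) := ⟨_, rfl⟩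
  have hεpos : 0 < ε := by rw [hε]; positivity
  obtain ⟨n0, hn0⟩ := hlt (δ + ε) (by linarith)
  have hAex : ∃ A : Set ((Fin m0 × Fin m) ⊕ Fin n0 → Option β), ¬ HasLine A ∧ δ - ε < dn A := by
    by_contra! hcon
    have : δ - ε ∈ S := by
      refine ⟨m0 * m + n0, fun A hA => ?_⟩
      let e : Fin (m0 * m + n0) ≃ (Fin m0 × Fin m) ⊕ Fin n0 :=
        finSumFinEquiv.symm.trans (Equiv.sumCongr finProdFinEquiv.symm (Equiv.refl _))
      rw [← dn_comp_equiv e A]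
      exact hcon _ (fun h => hA (h.of_preimage _))
    have := csInf_le hbdd this
    linarith
  obtain ⟨A, hA, hAd⟩ := hAex
  have hfibline : ∀ x : Fin m0 × Fin m → Option β, 
      dn {z : Fin n0 → Option β | Sum.elim x z ∈ A} ≤ δ + ε := by
    intro x
    refine hn0 _ fun h => hA (HasLine.of_preimage (Sub.fixL x) ?_)
    simpa [Set.preimage] using h
  refine core δ η hδ hδ1 m0 m n1 n0 hm0 hη hn1 ?_ ?_ A hA ?_
  · intro κ _ hκ D hD
    have := hN κ ((le_max_left _ _).trans hκ) D hD
    rw [mul_div_cancel₀ _ hkpos.ne'] at this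
    simpa using this
  · intro κ _ hκ
    rw [dn_noNone]
    refine le_trans ?_ ht.le
    exact pow_le_pow_of_le_one (dn_nonneg _) hq.le ((le_max_right _ _).trans hκ)
  · intro x0
    classical
    letI := Fintype.ofFinite (Fin m0 × Fin m → Option β)
    unfold dn at hAd
    rw [av_sumArrow, av_eq, lt_div_iff₀ (hK ▸ hKpos), ← Finset.add_sum_erase _ _ (Finset.mem_univ x0)] at hAd
    have h1 : ∑ x ∈ Finset.univ.erase x0, av (fun z => ind A (Sum.elim x z)) ≤
        ∑ _x ∈ Finset.univ.erase x0, (δ + ε) := Finset.sum_le_sum fun x _ => hfibline x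
    rw [Finset.sum_const, nsmul_eq_mul, Finset.card_erase_of_mem (Finset.mem_univ x0), Finset.card_univ,
      ← Nat.card_eq_fintype_card, Nat.cast_sub Nat.card_pos, ← hK] at h1
    rw [← hK] at hAd
    have h2 : dn {z : Fin n0 → Option β | Sum.elim x0 z ∈ A} = av (fun z => ind A (Sum.elim x0 z)) := rfl
    rw [h2]
    have h3 : ε * (2 * K) = δ * η / 8 := by rw [hε]; field_simp
    push_cast at h1
    nlinarith

lemma Dense.congr {α α' : Type} [Finite α] [Finite α'] (e : α ≃ α') (H : Dense α) : Dense α' := by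
  intro ε hε
  obtain ⟨n, hn⟩ := H ε hε
  refine ⟨n, fun A hA => ?_⟩
  rw [← dn_equiv ((Equiv.refl (Fin n)).arrowCongr e)] at hA
  obtain ⟨V, hV⟩ := hn _ hA
  refine ⟨⟨fun i => (V.idx i).map e id, fun j => ?_⟩, fun y => ?_⟩
  · obtain ⟨i, hi⟩ := V.proper j
    exact ⟨i, by simp [hi]⟩
  · have := hV (fun i => e.symm (y i))
    rw [Set.mem_preimage] at this
    convert this using 1
    ext1 i
    simp only [Sub.ev, Equiv.arrowCongr_apply, Function.comp]
    rcases h : V.idx i with a | a <;> simp [h]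

theorem dense_fin (k : ℕ) : Dense (Fin (k + 1)) := by
  induction k with
  | zero =>
    intro ε hε
    refine ⟨1, fun A hA => ?_⟩
    obtain ⟨x, hx⟩ := nonempty_of_dn_pos (hε.trans_le hA)
    refine ⟨⟨fun _ => Sum.inr (), fun _ => ⟨0, rfl⟩⟩, fun y => ?_⟩
    convert hx using 1
    ext1 i
    exact Subsingleton.elim (α := Fin 1) _ _
  | succ k ih => exact (dense_option ih).congr (finSuccEquiv (k + 1)).symm
end DHJ

namespace DHJ

/-- dimension for the alphabet of size `k+1` -/
noncomputable def dim (k : ℕ) : ℕ := (dense_fin k (1 / (k + 1)) (by positivity)).choose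

lemma dim_spec (k : ℕ) (A : Set (Fin (dim k) → Fin (k + 1))) (h : (1:ℝ) / (k + 1) ≤ dn A) :
    HasLine A := (dense_fin k (1 / (k + 1)) (by positivity)).choose_spec A h

/-- projection of the cube to an arithmetic progression -/
def pt {n k : ℕ} (a d : ℕ) (x : Fin n → Fin (k + 1)) : ℕ := a + (∑ i, (x i : ℕ)) * (d + 1)

/-- the basic measures -/
noncomputable def mu (p : ℕ × ℕ × ℕ) (B : Set ℕ) : ℝ≥0∞ :=
  ENNReal.ofReal ((p.1 + 1) *
    dn ((pt p.2.1 p.2.2 : (Fin (dim p.1) → Fin (p.1 + 1)) → ℕ) ⁻¹' B))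

lemma mu_mono (p) {A B : Set ℕ} (h : A ⊆ B) : mu p A ≤ mu p B := by
  unfold mu
  apply ENNReal.ofReal_le_ofReal
  gcongr
  exact dn_mono (Set.preimage_mono h)

lemma dn_empty {X : Type} [Finite X] : dn (∅ : Set X) = 0 := by
  by_contra h
  have := nonempty_of_dn_pos (lt_of_le_of_ne (dn_nonneg _) (Ne.symm h))
  simp at this

lemma dn_union {X : Type} [Finite X] {A B : Set X} (h : Disjoint A B) :
    dn (A ∪ B) = dn A + dn B := by
  unfold dn
  rw [← av_add]
  congr 1
  ext x
  by_cases hA : x ∈ A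
  · have hB : x ∉ B := fun hB => Set.disjoint_left.1 h hA hB
    simp [ind, hA, hB]
  · by_cases hB : x ∈ B
    · rw [ind_of_mem (Set.mem_union_right A hB), ind_of_mem hB, ind_of_notMem hA]; simp
    · rw [ind_of_notMem (by simp [hA, hB]), ind_of_notMem hB, ind_of_notMem hA]; simp

lemma mu_measure (p) : IsFAMeasure (mu p) := by
  refine ⟨by simp [mu, dn_empty], fun A B h => ?_⟩
  unfold mu
  rw [Set.preimage_union, dn_union (h.preimage _), mul_add, ENNReal.ofReal_add]
  · exact mul_nonneg (by positivity) (dn_nonneg _)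
  · exact mul_nonneg (by positivity) (dn_nonneg _)

lemma mu_fin (p) (A : Set ℕ) : ∃ F ⊆ A, F.Finite ∧ mu p A = mu p F := by
  refine ⟨A ∩ Set.range (pt p.2.1 p.2.2 : (Fin (dim p.1) → Fin (p.1 + 1)) → ℕ),
    Set.inter_subset_left, (Set.finite_range _).inter_of_right _, ?_⟩
  unfold mu
  rw [Set.preimage_inter_range]

lemma mu_union (p) (A B : Set ℕ) : mu p (A ∪ B) ≤ mu p A + mu p B := by
  rw [← Set.union_sdiff_self, (mu_measure p).2 _ _ Set.disjoint_sdiff_right]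
  gcongr
  exact mu_mono p Set.sdiff_subset

/-- the nonpathological submeasure -/
noncomputable def psi (B : Set ℕ) : ℝ≥0∞ := ⨆ p, mu p B

lemma mu_le_psi (p) (B) : mu p B ≤ psi B := le_iSup (fun p => mu p B) p

lemma psi_mono {A B : Set ℕ} (h : A ⊆ B) : psi A ≤ psi B := iSup_mono fun p => mu_mono p h

lemma psi_sub : IsSubmeasure psi := by
  refine ⟨?_, fun A B h => psi_mono h, fun A B => ?_⟩
  · simp [psi, (mu_measure _).1]
  · refine iSup_le fun p => (mu_union p A B).trans ?_
    exact add_le_add (mu_le_psi p A) (mu_le_psi p B)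

lemma psi_lsc : IsLSC psi := by
  intro A
  apply le_antisymm
  · refine iSup_le fun p => ?_
    obtain ⟨F, hFA, hF, h⟩ := mu_fin p A
    rw [h]
    exact (mu_le_psi p F).trans (le_iSup₂ (f := fun F (_ : F ⊆ A ∧ F.Finite) => psi F) F ⟨hFA, hF⟩)
  · exact iSup₂_le fun F hF => psi_mono hF.1

lemma psi_hat (A : Set ℕ) : hat psi A = psi A := by
  apply le_antisymm
  · exact iSup₂_le fun μ h => h.2 A
  · refine iSup_le fun p => ?_
    exact le_iSup₂ (f := fun (μ : Set ℕ → ℝ≥0∞) (_ : IsFAMeasure μ ∧ ∀ B, μ B ≤ psi B) => μ A)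
      (mu p) ⟨mu_measure p, mu_le_psi p⟩

lemma ap_of_line {n k : ℕ} (a d : ℕ) (B : Set ℕ)
    (h : HasLine ((pt a d : (Fin n → Fin (k + 1)) → ℕ) ⁻¹' B)) : ContainsAP B (k + 1) := by
  classical
  obtain ⟨V, hV⟩ := h
  let S : Finset (Fin n) := Finset.univ.filter fun i => V.idx i = Sum.inr ()
  refine ⟨pt a d (V.ev fun _ => 0), S.card * (d + 1), ?_, fun t ht => ?_⟩
  · obtain ⟨i, hi⟩ := V.proper ()
    have : 0 < S.card := Finset.card_pos.2 ⟨i, by simp [S, hi]⟩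
    positivity
  · have h1 := hV (fun _ => ⟨t, ht⟩)
    have h2 : ∀ i, ((V.ev (fun _ => ⟨t, ht⟩) i : Fin (k + 1)) : ℕ) =
        (V.ev (fun _ => 0) i : Fin (k + 1)) + if V.idx i = Sum.inr () then t else 0 := by
      intro i
      rcases h : V.idx i with b | b <;> simp [Sub.ev, h]
    have h3 : pt a d (V.ev fun _ => ⟨t, ht⟩) = pt a d (V.ev fun _ => 0) + t * (S.card * (d + 1)) := by
      unfold pt
      rw [Finset.sum_congr rfl fun i _ => h2 i, Finset.sum_add_distrib, ← Finset.sum_filter,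
        Finset.sum_const, smul_eq_mul]
      change a + (_ + S.card * t) * (d + 1) = _
      ring
    rw [Set.mem_preimage, h3] at h1
    exact h1

lemma containsAP_mono {B : Set ℕ} {j k : ℕ} (h : j ≤ k) (hB : ContainsAP B k) : ContainsAP B j := by
  obtain ⟨a, d, hd, hi⟩ := hB
  exact ⟨a, d, hd, fun i hij => hi i (hij.trans_le h)⟩

lemma psi_vdW : {A : Set ℕ | psi A < ⊤} = vdW := by
  ext B
  constructor
  · intro hB
    change psi B < ⊤ at hB
    by_contra hcon
    have hap : ∀ k, ContainsAP B k := by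
      intro k
      by_contra h
      exact hcon ⟨k, h⟩
    obtain ⟨k, hk⟩ := ENNReal.exists_nat_gt hB.ne
    obtain ⟨a, d, hd, hi⟩ := hap (dim k * k + 1)
    obtain ⟨d, rfl⟩ := Nat.exists_eq_succ_of_ne_zero hd.ne'
    have h1 : (pt a d : (Fin (dim k) → Fin (k + 1)) → ℕ) ⁻¹' B = Set.univ := by
      apply Set.eq_univ_of_forall
      intro x
      apply hi
      refine Nat.lt_succ_of_le ?_
      calc ∑ i, (x i : ℕ) ≤ ∑ _i : Fin (dim k), k := Finset.sum_le_sum fun i _ => by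
            have := (x i).2; omega
        _ = dim k * k := by simp
    have h2 : dn (Set.univ : Set (Fin (dim k) → Fin (k + 1))) = 1 := by
      rw [← av_const (X := (Fin (dim k) → Fin (k + 1))) 1]
      unfold dn
      congr 1; ext x; simp [ind]
    have h3 := mu_le_psi (k, a, d) B
    unfold mu at h3
    simp only [h1, h2] at h3
    have h4 : (k : ℝ≥0∞) ≤ ENNReal.ofReal (((k : ℝ) + 1) * 1) := by
      rw [← ENNReal.ofReal_natCast]
      apply ENNReal.ofReal_le_ofReal
      linarith
    exact absurd (h4.trans h3) (not_le.2 hk)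
  · rintro ⟨j, hj⟩
    change psi B < ⊤
    refine lt_of_le_of_lt (b := ENNReal.ofReal ((j : ℝ) + 1)) (iSup_le fun p => ?_) ENNReal.ofReal_lt_top
    obtain ⟨k, a, d⟩ := p
    apply ENNReal.ofReal_le_ofReal
    simp only
    rcases le_or_gt j (k + 1) with h | h
    · have hlt : dn ((pt a d : (Fin (dim k) → Fin (k + 1)) → ℕ) ⁻¹' B) < 1 / (k + 1) := by
        by_contra! hcon
        exact hj (containsAP_mono h (ap_of_line a d B (dim_spec k _ hcon)))
      rw [lt_div_iff₀ (by positivity)] at hlt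
      have : (0:ℝ) ≤ j := by positivity
      linarith
    · have h1 := dn_le_one ((pt a d : (Fin (dim k) → Fin (k + 1)) → ℕ) ⁻¹' B)
      have h2 : (k:ℝ) + 1 ≤ j := by exact_mod_cast h.le
      have h3 : (0:ℝ) ≤ (k:ℝ) + 1 := by positivity
      nlinarith

lemma psi_deg : degPFin psi ≤ 2 := by
  refine iSup₂_le fun A _ => ?_
  rw [psi_hat]
  unfold pratio
  split_ifs with h
  · norm_num
  · push Not at h
    rw [ENNReal.div_self (fun h0 => h.1 h0 h0) (fun h0 => h.2 h0 h0)]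
    norm_num
end DHJ

/-- There is an lsc submeasure `φ` with `Fin φ = 𝒲` and `P_Fin φ ≤ 2`; consequently there is
a nonpathological lsc submeasure `ψ` with `Fin ψ = 𝒲`, i.e., the van der Waerden ideal is a
nonpathological `F_σ` ideal. -/
theorem stmt18 :
    (∃ φ : Set ℕ → ℝ≥0∞, IsSubmeasure φ ∧ IsLSC φ ∧
      {A : Set ℕ | φ A < ⊤} = vdW ∧ degPFin φ ≤ 2) ∧
    ∃ ψ : Set ℕ → ℝ≥0∞, IsSubmeasure ψ ∧ IsLSC ψ ∧ (∀ A, hat ψ A = ψ A) ∧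
      {A : Set ℕ | ψ A < ⊤} = vdW := by
  exact ⟨⟨DHJ.psi, DHJ.psi_sub, DHJ.psi_lsc, DHJ.psi_vdW, DHJ.psi_deg⟩,
    DHJ.psi, DHJ.psi_sub, DHJ.psi_lsc, DHJ.psi_hat, DHJ.psi_vdW⟩
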